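/- arXiv:0704.3576 — 2 statements merged into one kernel-verified Lean document; each statement's English description precedes it below -/
import Mathlib

section
/- Differential equations for the GCHP: for every real ν > 0, every ξ ∈ ℂ, all nonnegative integers m, n and all (z,w) ∈ ℂ², writing G for the function (z,w) ↦ G_ν^{m,n}(z,w|ξ): (i) -∂²G/∂z∂w + ν·z·∂G/∂z = ν·m·G; (ii) -∂²G/∂z∂w + (ν·w + conj(ξ)/2)·∂G/∂w = ν·n·G; and consequently (iii) ν·z·∂G/∂z - (ν·w + conj(ξ)/2)·∂G/∂w = ν·(m - n)·G, where m - n is taken as an integer. -/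
/-!
Write `cH m n z u = ∑ j, c j * z ^ (m - j) * u ^ (n - j)` with
`c j = (-1) ^ j * m! * n! / (j! * (m - j)! * (n - j)!)`. The Euler operators `z ∂_z` and `u ∂_u`
multiply the `j`-th monomial by `m - j` and `n - j`. The coefficients satisfy
`c j * (m - j) * (n - j) = -(j + 1) * c (j + 1)`, so `-∂_z ∂_u` multiplies the `j`-th monomial
by `j` after a shift of index (`cH_mixed`). Adding the two gives the eigenvalue `m`, respectively
`n`. For the GCHP, `u = ν * w + conj ξ / 2`, and the chain rule contributes a factor `ν` for each
derivative in `w`. The third equation is the difference of the first two.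
-/

open Complex MeasureTheory

/-- The complex Hermite polynomials in two independent complex variables. -/
noncomputable def cH (m n : ℕ) (z w : ℂ) : ℂ :=
  (m.factorial : ℂ) * (n.factorial : ℂ) *
    ∑ j ∈ Finset.range (min m n + 1),
      (-1 : ℂ) ^ j * z ^ (m - j) * w ^ (n - j) /
        ((j.factorial : ℂ) * ((m - j).factorial : ℂ) * ((n - j).factorial : ℂ))

/-- The generalized complex Hermite polynomials (GCHP). -/
noncomputable def G (ν : ℝ) (ξ : ℂ) (m n : ℕ) (z w : ℂ) : ℂ :=
  cH m n z ((ν : ℂ) * w + (starRingEnd ℂ) ξ / 2)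

/-- The coefficient of `z ^ (m - j) * u ^ (n - j)` in `cH m n z u`. -/
noncomputable def cHCoeff (m n j : ℕ) : ℂ :=
  (m.factorial : ℂ) * (n.factorial : ℂ) * (-1 : ℂ) ^ j /
    ((j.factorial : ℂ) * ((m - j).factorial : ℂ) * ((n - j).factorial : ℂ))

lemma cH_eq_sum (m n : ℕ) (z u : ℂ) :
    cH m n z u =
      ∑ j ∈ Finset.range (min m n + 1), cHCoeff m n j * z ^ (m - j) * u ^ (n - j) := by
  unfold cH cHCoeff
  rw [Finset.mul_sum]
  exact Finset.sum_congr rfl fun j _ => by ring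

lemma cHCoeff_succ {m n j : ℕ} (hm : j < m) (hn : j < n) :
    cHCoeff m n j * ((m - j : ℕ) : ℂ) * ((n - j : ℕ) : ℂ) =
      -(((j + 1 : ℕ) : ℂ) * cHCoeff m n (j + 1)) := by
  obtain ⟨a, rfl⟩ := Nat.exists_eq_add_of_lt hm
  obtain ⟨b, rfl⟩ := Nat.exists_eq_add_of_lt hn
  have ha : j + a + 1 - j = a + 1 := by omega
  have hb : j + b + 1 - j = b + 1 := by omega
  have ha' : j + a + 1 - (j + 1) = a := by omega
  have hb' : j + b + 1 - (j + 1) = b := by omega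
  unfold cHCoeff
  rw [ha, hb, ha', hb', Nat.factorial_succ a, Nat.factorial_succ b, Nat.factorial_succ j]
  have h1 : ((a + 1 : ℕ) : ℂ) ≠ 0 := Nat.cast_ne_zero.2 (by omega)
  have h2 : ((b + 1 : ℕ) : ℂ) ≠ 0 := Nat.cast_ne_zero.2 (by omega)
  have h3 : ((j + 1 : ℕ) : ℂ) ≠ 0 := Nat.cast_ne_zero.2 (by omega)
  have h4 : (a.factorial : ℂ) ≠ 0 := Nat.cast_ne_zero.2 a.factorial_ne_zero
  have h5 : (b.factorial : ℂ) ≠ 0 := Nat.cast_ne_zero.2 b.factorial_ne_zero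
  have h6 : (j.factorial : ℂ) ≠ 0 := Nat.cast_ne_zero.2 j.factorial_ne_zero
  rw [Nat.cast_mul (a + 1), Nat.cast_mul (b + 1), Nat.cast_mul (j + 1), pow_succ]
  generalize ((a + 1 : ℕ) : ℂ) = A at *
  generalize ((b + 1 : ℕ) : ℂ) = B at *
  generalize ((j + 1 : ℕ) : ℂ) = J at *
  field_simp

/-- The left-hand side is `∂²(cH m n)/∂z∂u`. Its top term vanishes because `j = min m n` makes
one of the factors `m - j`, `n - j` zero; the right-hand side has no `j = 0` term, so the two sums
match after a shift of index. -/
lemma cH_mixed (m n : ℕ) (z u : ℂ) :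
    ∑ j ∈ Finset.range (min m n + 1),
        cHCoeff m n j * (((m - j : ℕ) : ℂ) * z ^ (m - j - 1)) *
          (((n - j : ℕ) : ℂ) * u ^ (n - j - 1)) =
      -∑ j ∈ Finset.range (min m n + 1),
        (j : ℂ) * (cHCoeff m n j * z ^ (m - j) * u ^ (n - j)) := by
  rw [Finset.sum_range_succ, Finset.sum_range_succ' _ (min m n)]
  have hlast : ((m - min m n : ℕ) : ℂ) = 0 ∨ ((n - min m n : ℕ) : ℂ) = 0 := by
    rcases le_total m n with h | h
    · left; simp [h]
    · right; simp [h]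
  have hzero : cHCoeff m n (min m n) * (((m - min m n : ℕ) : ℂ) * z ^ (m - min m n - 1)) *
      (((n - min m n : ℕ) : ℂ) * u ^ (n - min m n - 1)) = 0 := by
    rcases hlast with h | h <;> rw [h] <;> ring
  rw [hzero, Nat.cast_zero, zero_mul, add_zero, add_zero, ← Finset.sum_neg_distrib]
  refine Finset.sum_congr rfl fun j hj => ?_
  have hj' := Finset.mem_range.1 hj
  rw [← Nat.sub_sub m j 1, ← Nat.sub_sub n j 1]
  linear_combination z ^ (m - j - 1) * u ^ (n - j - 1) *
    cHCoeff_succ (m := m) (n := n) (j := j) (by omega) (by omega)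

lemma mul_natCast_mul_pow_pred (k : ℕ) (x : ℂ) :
    x * ((k : ℂ) * x ^ (k - 1)) = (k : ℂ) * x ^ k := by
  cases k with
  | zero => simp
  | succ k => rw [Nat.add_sub_cancel, pow_succ]; ring

lemma hasDerivAt_G_z (ν : ℝ) (ξ : ℂ) (m n : ℕ) (z w : ℂ) :
    HasDerivAt (fun z' : ℂ => G ν ξ m n z' w)
      (∑ j ∈ Finset.range (min m n + 1), cHCoeff m n j * (((m - j : ℕ) : ℂ) * z ^ (m - j - 1)) *
        ((ν : ℂ) * w + (starRingEnd ℂ) ξ / 2) ^ (n - j)) z := by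
  simp only [G, cH_eq_sum]
  exact HasDerivAt.fun_sum fun j _ => ((hasDerivAt_pow (m - j) z).const_mul _).mul_const _

lemma hasDerivAt_G_w (ν : ℝ) (ξ : ℂ) (m n : ℕ) (z w : ℂ) :
    HasDerivAt (fun w' : ℂ => G ν ξ m n z w')
      (∑ j ∈ Finset.range (min m n + 1), cHCoeff m n j * z ^ (m - j) *
        (((n - j : ℕ) : ℂ) * ((ν : ℂ) * w + (starRingEnd ℂ) ξ / 2) ^ (n - j - 1) * ν)) w := by
  simp only [G, cH_eq_sum]
  have hu : HasDerivAt (fun w' : ℂ => (ν : ℂ) * w' + (starRingEnd ℂ) ξ / 2) (ν : ℂ) w := by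
    simpa using ((hasDerivAt_id w).const_mul (ν : ℂ)).add_const ((starRingEnd ℂ) ξ / 2)
  exact HasDerivAt.fun_sum fun j _ => (hu.fun_pow (n - j)).const_mul _

lemma deriv_deriv_G (ν : ℝ) (ξ : ℂ) (m n : ℕ) (z w : ℂ) :
    deriv (fun z' : ℂ => deriv (fun w' : ℂ => G ν ξ m n z' w') w) z =
      -((ν : ℂ) * ∑ j ∈ Finset.range (min m n + 1), (j : ℂ) *
        (cHCoeff m n j * z ^ (m - j) * ((ν : ℂ) * w + (starRingEnd ℂ) ξ / 2) ^ (n - j))) := by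
  simp only [fun z' => (hasDerivAt_G_w ν ξ m n z' w).deriv]
  rw [(HasDerivAt.fun_sum fun j _ =>
    ((hasDerivAt_pow (m - j) z).const_mul _).mul_const _).deriv, ← mul_neg, ← cH_mixed,
    Finset.mul_sum]
  exact Finset.sum_congr rfl fun j _ => by ring

/-- Differential equations satisfied by the GCHP. -/
theorem gchp_differential_equations (ν : ℝ) (hν : 0 < ν) (ξ : ℂ) (m n : ℕ) (z w : ℂ) :
    (-(deriv (fun z' : ℂ => deriv (fun w' : ℂ => G ν ξ m n z' w') w) z)
        + (ν : ℂ) * z * deriv (fun z' : ℂ => G ν ξ m n z' w) z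
      = (ν : ℂ) * (m : ℂ) * G ν ξ m n z w) ∧
    (-(deriv (fun z' : ℂ => deriv (fun w' : ℂ => G ν ξ m n z' w') w) z)
        + ((ν : ℂ) * w + (starRingEnd ℂ) ξ / 2) * deriv (fun w' : ℂ => G ν ξ m n z w') w
      = (ν : ℂ) * (n : ℂ) * G ν ξ m n z w) ∧
    ((ν : ℂ) * z * deriv (fun z' : ℂ => G ν ξ m n z' w) z
        - ((ν : ℂ) * w + (starRingEnd ℂ) ξ / 2) * deriv (fun w' : ℂ => G ν ξ m n z w') w
      = (ν : ℂ) * (((m : ℤ) - (n : ℤ) : ℤ) : ℂ) * G ν ξ m n z w) := by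
  have h1 : -(deriv (fun z' : ℂ => deriv (fun w' : ℂ => G ν ξ m n z' w') w) z)
        + (ν : ℂ) * z * deriv (fun z' : ℂ => G ν ξ m n z' w) z
      = (ν : ℂ) * (m : ℂ) * G ν ξ m n z w := by
    rw [deriv_deriv_G, (hasDerivAt_G_z ν ξ m n z w).deriv, G, cH_eq_sum, neg_neg,
      Finset.mul_sum, Finset.mul_sum, Finset.mul_sum, ← Finset.sum_add_distrib]
    refine Finset.sum_congr rfl fun j hj => ?_
    have hj' : j ≤ m := by have := Finset.mem_range.1 hj; omega
    have hp := mul_natCast_mul_pow_pred (m - j) z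
    have hc : ((m - j : ℕ) : ℂ) = m - j := Nat.cast_sub hj'
    generalize (ν : ℂ) * w + (starRingEnd ℂ) ξ / 2 = u
    linear_combination (ν : ℂ) * cHCoeff m n j * u ^ (n - j) * hp +
      (ν : ℂ) * cHCoeff m n j * u ^ (n - j) * z ^ (m - j) * hc
  have h2 : -(deriv (fun z' : ℂ => deriv (fun w' : ℂ => G ν ξ m n z' w') w) z)
        + ((ν : ℂ) * w + (starRingEnd ℂ) ξ / 2) * deriv (fun w' : ℂ => G ν ξ m n z w') w
      = (ν : ℂ) * (n : ℂ) * G ν ξ m n z w := by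
    rw [deriv_deriv_G, (hasDerivAt_G_w ν ξ m n z w).deriv, G, cH_eq_sum, neg_neg,
      Finset.mul_sum, Finset.mul_sum, Finset.mul_sum, ← Finset.sum_add_distrib]
    refine Finset.sum_congr rfl fun j hj => ?_
    have hj' : j ≤ n := by have := Finset.mem_range.1 hj; omega
    generalize (ν : ℂ) * w + (starRingEnd ℂ) ξ / 2 = u
    have hp := mul_natCast_mul_pow_pred (n - j) u
    have hc : ((n - j : ℕ) : ℂ) = n - j := Nat.cast_sub hj'
    linear_combination (ν : ℂ) * cHCoeff m n j * z ^ (m - j) * hp +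
      (ν : ℂ) * cHCoeff m n j * u ^ (n - j) * z ^ (m - j) * hc
  refine ⟨h1, h2, ?_⟩
  push_cast
  linear_combination h1 - h2
end

section
/- Norm recursion under weak orthogonality: fix a real ν > 0, ξ ∈ ℂ and a measurable weight ω : ℂ → ℝ, and for f, g : ℂ → ℂ set ⟨f, g⟩_ω := ∫_ℂ f(z)·conj(g(z))·ω(z) dλ(z). Write 𝔊^{m,n}(z) := G_ν^{m,n}(z, conj(z)|ξ). Assume: (H1) for all m, n, j, k the functions z ↦ 𝔊^{m,n}(z)·conj(𝔊^{j,k}(z))·ω(z) and z ↦ z·𝔊^{m,n}(z)·conj(𝔊^{j,k}(z))·ω(z) are integrable; (H2) ⟨𝔊^{m,n}, 𝔊^{j,k}⟩_ω = 0 whenever n ≠ k. Then for all nonnegative integers m, n: ⟨𝔊^{m,n+1}, 𝔊^{m,n+1}⟩_ω = ν^{n+1}·(n+1)!·⟨𝔊^{m,0}, 𝔊^{m,0}⟩_ω. -/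
/-!
The complex Hermite polynomials satisfy the two ladder relations
`H^{m,n+1} = w H^{m,n} - m H^{m-1,n}` and `H^{m+1,n+1} = z H^{m,n+1} - (n+1) H^{m,n}`
(`cH_succ_right`, `cH_succ_left`), which are exchanged by the symmetry `H^{m,n}(z,w) = H^{n,m}(w,z)`.

Expand the first factor of `⟨𝔊^{m,n+1}, 𝔊^{m,n+1}⟩` by the first relation, with `w = ν z̄ + ξ̄/2`,
move `z̄` onto the second factor as `z`, and expand `z 𝔊^{m,n+1}` there by the second relation.
All resulting inner products but one pair different second indices, so they vanish; what remains is
`⟨𝔊^{m,n+1}, 𝔊^{m,n+1}⟩ = ν (n+1) ⟨𝔊^{m,n}, 𝔊^{m,n}⟩`, and induction on `n` concludes.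
Since the relations eliminate the explicit factor `z`, splitting the integral rests on the
integrability of the products `𝔊^{m,n} conj(𝔊^{j,k}) ω`.
-/

open Complex MeasureTheory

/-- Binomial form of `cH`. Vanishing binomial coefficients allow any summation range that exceeds
`min m n`, so the sums for neighbouring indices can be compared termwise. -/
lemma cH_eq_sum_choose (m n N : ℕ) (hN : min m n < N) (z w : ℂ) :
    cH m n z w = ∑ j ∈ Finset.range N,
      (-1 : ℂ) ^ j * (j.factorial : ℂ) * (m.choose j : ℂ) * (n.choose j : ℂ) *
        z ^ (m - j) * w ^ (n - j) := by
  have hsub : Finset.range (min m n + 1) ⊆ Finset.range N :=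
    Finset.range_subset_range.2 hN
  rw [← Finset.sum_subset hsub, cH, Finset.mul_sum]
  · refine Finset.sum_congr rfl fun j hj => ?_
    have hj' : j ≤ min m n := Nat.lt_succ_iff.1 (Finset.mem_range.1 hj)
    have hm : j ≤ m := hj'.trans (min_le_left _ _)
    have hn : j ≤ n := hj'.trans (min_le_right _ _)
    rw [Nat.cast_choose ℂ hm, Nat.cast_choose ℂ hn]
    have h1 : (j.factorial : ℂ) ≠ 0 := Nat.cast_ne_zero.2 j.factorial_ne_zero
    have h2 : ((m - j).factorial : ℂ) ≠ 0 := Nat.cast_ne_zero.2 (m - j).factorial_ne_zero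
    have h3 : ((n - j).factorial : ℂ) ≠ 0 := Nat.cast_ne_zero.2 (n - j).factorial_ne_zero
    field_simp
  · intro j _ hj
    have hj' : min m n < j := by rw [Finset.mem_range] at hj; omega
    rcases min_lt_iff.1 hj' with h | h <;> simp [Nat.choose_eq_zero_of_lt h]

lemma cH_symm (m n : ℕ) (z w : ℂ) : cH m n z w = cH n m w z := by
  rw [cH_eq_sum_choose m n (min m n + 1) (Nat.lt_succ_self _),
    cH_eq_sum_choose n m (min m n + 1) (by rw [min_comm]; exact Nat.lt_succ_self _)]
  exact Finset.sum_congr rfl fun j _ => by ring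

/-- Raising the second index. For `m = 0` the truncated index `m - 1` is harmless, since its
coefficient is zero. -/
lemma cH_succ_right (m n : ℕ) (z w : ℂ) :
    cH m (n + 1) z w = w * cH m n z w - (m : ℂ) * cH (m - 1) n z w := by
  rw [cH_eq_sum_choose m (n + 1) (n + 2) (by omega), cH_eq_sum_choose m n (n + 2) (by omega),
    cH_eq_sum_choose (m - 1) n (n + 1) (by omega), Finset.sum_range_succ',
    Finset.sum_range_succ' _ (n + 1), mul_add, Finset.mul_sum, Finset.mul_sum,
    add_sub_right_comm, ← Finset.sum_sub_distrib]
  congr 1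
  · refine Finset.sum_congr rfl fun j _ => ?_
    -- `(j + 1) * C(m, j + 1) = m * C(m - 1, j)`
    have hc : ((j : ℂ) + 1) * (m.choose (j + 1) : ℂ) = (m : ℂ) * ((m - 1).choose j : ℂ) := by
      cases m with
      | zero => simp
      | succ m =>
        have := Nat.add_one_mul_choose_eq m j
        rw [Nat.add_sub_cancel, mul_comm]
        exact_mod_cast this.symm
    have hw : (n.choose (j + 1) : ℂ) * (w * w ^ (n - (j + 1))) =
        (n.choose (j + 1) : ℂ) * w ^ (n - j) := by
      rcases lt_or_ge j n with h | h
      · rw [← pow_succ', show n - (j + 1) + 1 = n - j by omega]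
      · simp [Nat.choose_eq_zero_of_lt (Nat.lt_succ_of_le h)]
    rw [show m - 1 - j = m - (j + 1) by omega, show n + 1 - (j + 1) = n - j by omega,
      Nat.choose_succ_succ, Nat.factorial_succ]
    push_cast
    linear_combination
      (-(-1 : ℂ) ^ j * (j.factorial : ℂ) * (n.choose j : ℂ) * z ^ (m - (j + 1)) *
        w ^ (n - j)) * hc +
      ((-1 : ℂ) ^ j * ((j : ℂ) + 1) * (j.factorial : ℂ) * (m.choose (j + 1) : ℂ) *
        z ^ (m - (j + 1))) * hw
  · simp [pow_succ]
    ring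

lemma cH_succ_left (m n : ℕ) (z w : ℂ) :
    cH (m + 1) (n + 1) z w = z * cH m (n + 1) z w - ((n : ℂ) + 1) * cH m n z w := by
  rw [cH_symm, cH_succ_right, cH_symm (n + 1) m, Nat.add_sub_cancel, cH_symm n m]
  push_cast
  rfl

/-- Norm recursion for the GCHP under the weak orthogonality assumption. -/
theorem gchp_norm_recursion (ν : ℝ) (hν : 0 < ν) (ξ : ℂ)
    (ω : ℂ → ℝ) (hω : Measurable ω)
    (H1 : ∀ m n j k : ℕ,
      Integrable (fun z : ℂ =>
        G ν ξ m n z ((starRingEnd ℂ) z) *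
          (starRingEnd ℂ) (G ν ξ j k z ((starRingEnd ℂ) z)) * (ω z : ℂ)) ∧
      Integrable (fun z : ℂ =>
        z * G ν ξ m n z ((starRingEnd ℂ) z) *
          (starRingEnd ℂ) (G ν ξ j k z ((starRingEnd ℂ) z)) * (ω z : ℂ)))
    (H2 : ∀ m n j k : ℕ, n ≠ k →
      ∫ z : ℂ, G ν ξ m n z ((starRingEnd ℂ) z) *
        (starRingEnd ℂ) (G ν ξ j k z ((starRingEnd ℂ) z)) * (ω z : ℂ) = 0)
    (m n : ℕ) :
    (∫ z : ℂ, G ν ξ m (n + 1) z ((starRingEnd ℂ) z) *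
        (starRingEnd ℂ) (G ν ξ m (n + 1) z ((starRingEnd ℂ) z)) * (ω z : ℂ))
      = (ν : ℂ) ^ (n + 1) * ((n + 1).factorial : ℂ) *
          ∫ z : ℂ, G ν ξ m 0 z ((starRingEnd ℂ) z) *
            (starRingEnd ℂ) (G ν ξ m 0 z ((starRingEnd ℂ) z)) * (ω z : ℂ) := by
  have step : ∀ n : ℕ,
      (∫ z : ℂ, G ν ξ m (n + 1) z ((starRingEnd ℂ) z) *
        (starRingEnd ℂ) (G ν ξ m (n + 1) z ((starRingEnd ℂ) z)) * (ω z : ℂ))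
      = (ν : ℂ) * ((n : ℂ) + 1) *
          ∫ z : ℂ, G ν ξ m n z ((starRingEnd ℂ) z) *
            (starRingEnd ℂ) (G ν ξ m n z ((starRingEnd ℂ) z)) * (ω z : ℂ) := by
    intro n
    -- `P m n j k` is the integrand of `⟨𝔊^{m,n}, 𝔊^{j,k}⟩`.
    set P : ℕ → ℕ → ℕ → ℕ → ℂ → ℂ := fun m n j k z =>
      G ν ξ m n z ((starRingEnd ℂ) z) *
        (starRingEnd ℂ) (G ν ξ j k z ((starRingEnd ℂ) z)) * (ω z : ℂ) with hP
    have hint : ∀ m n j k, Integrable (P m n j k) := fun m n j k => (H1 m n j k).1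
    have hzero : ∀ m n j k, n ≠ k → ∫ z, P m n j k z = 0 := H2
    have key : ∀ z, P m (n + 1) m (n + 1) z =
        (ν : ℂ) * ((n : ℂ) + 1) * P m n m n z +
        ((ν : ℂ) * P m n (m + 1) (n + 1) z +
        ((starRingEnd ℂ) ξ / 2 * P m n m (n + 1) z +
          (-(m : ℂ)) * P (m - 1) n m (n + 1) z)) := by
      intro z
      have e1 : G ν ξ m (n + 1) z ((starRingEnd ℂ) z) =
          ((ν : ℂ) * (starRingEnd ℂ) z + (starRingEnd ℂ) ξ / 2) *
            G ν ξ m n z ((starRingEnd ℂ) z) -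
          (m : ℂ) * G ν ξ (m - 1) n z ((starRingEnd ℂ) z) := cH_succ_right _ _ _ _
      have e2 : (starRingEnd ℂ) (G ν ξ (m + 1) (n + 1) z ((starRingEnd ℂ) z)) =
          (starRingEnd ℂ) z * (starRingEnd ℂ) (G ν ξ m (n + 1) z ((starRingEnd ℂ) z)) -
          ((n : ℂ) + 1) * (starRingEnd ℂ) (G ν ξ m n z ((starRingEnd ℂ) z)) := by
        have := congrArg (starRingEnd ℂ)
          (cH_succ_left m n z ((ν : ℂ) * (starRingEnd ℂ) z + (starRingEnd ℂ) ξ / 2))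
        simpa only [G, map_sub, map_mul, map_add, map_natCast, map_one] using this
      simp only [hP]
      linear_combination
        ((starRingEnd ℂ) (G ν ξ m (n + 1) z ((starRingEnd ℂ) z)) * (ω z : ℂ)) * e1 -
        ((ν : ℂ) * G ν ξ m n z ((starRingEnd ℂ) z) * (ω z : ℂ)) * e2
    change ∫ z, P m (n + 1) m (n + 1) z = (ν : ℂ) * ((n : ℂ) + 1) * ∫ z, P m n m n z
    have i1 := (hint m n m n).const_mul ((ν : ℂ) * ((n : ℂ) + 1))
    have i2 := (hint m n (m + 1) (n + 1)).const_mul (ν : ℂ)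
    have i3 := (hint m n m (n + 1)).const_mul ((starRingEnd ℂ) ξ / 2)
    have i4 := (hint (m - 1) n m (n + 1)).const_mul (-(m : ℂ))
    have i34 := i3.add i4
    have i234 := i2.add i34
    rw [integral_congr_ae (Filter.Eventually.of_forall key)]
    refine (integral_add i1 i234).trans ?_
    rw [integral_add' i2 i34, integral_add' i3 i4]
    simp only [integral_const_mul]
    rw [hzero m n (m + 1) (n + 1) (by omega), hzero m n m (n + 1) (by omega),
      hzero (m - 1) n m (n + 1) (by omega)]
    ring
  induction n with
  | zero => rw [step 0]; simp
  | succ n ih =>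
    rw [step (n + 1), ih, Nat.factorial_succ (n + 1)]
    push_cast
    ring
end
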